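/- arXiv:0802.1977 — 7 statements merged into one kernel-verified Lean document; each statement's English description precedes it below -/
import Mathlib

section
/- Let R be an associative unital (possibly noncommutative) ring, let a, b ∈ R, and define the iterated commutators b_0 = b and b_{i+1} = a*b_i − b_i*a. Fix n ≥ 0 and assume b_i*b_j = b_j*b_i for all 0 ≤ i, j ≤ n−1. Then (a+b)^n equals the sum, over all pairs (S₀, π) where S₀ is a subset of {1,…,n} and π is a partition of {1,…,n} ∖ S₀ into nonempty blocks, of the terms (∏_{S ∈ π} b_{|S|−1}) * a^{|S₀|}, where the product over the blocks of π is well-defined because all the factors b_{|S|−1} commute pairwise. -/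
/-!
Write `B m` for the sum of `∏_{S ∈ π} b_{|S| - 1}` over the partitions `π` of an `m`-element set.
Sorting the partitions by the block `{x} ∪ U` of a distinguished point `x` gives
`B (m + 1) = ∑ₖ (m choose k) b_k B (m - k)`, the recursion of the complete Bell polynomials.
As `b₀` commutes with `b_k`, we have `(a + b₀) b_k = b_k (a + b₀) + b_{k+1}`; pushing `a + b₀`
through the recursion, Pascal's rule yields `(a + b₀) B m = B m a + B (m + 1)`. A second use of
Pascal's rule then gives `(a + b₀) ^ n = ∑ₖ (n choose k) B k a ^ (n - k)` by induction, and the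
binomial coefficient counts the subsets `S₀` with `n - k` elements.
-/

open Finset

section CompleteBell

variable {R : Type*} [Semiring R]

/-- The complete Bell polynomials evaluated at `c 0, c 1, …`, so that `c k` is the weight of a block
with `k + 1` elements. The entries of `c` need not commute; in each product the weight of the block
containing a distinguished element comes first. -/
def completeBell (c : ℕ → R) : ℕ → R
  | 0 => 1
  | n + 1 => ∑ i : Fin (n + 1), n.choose i • (c i * completeBell c (n - i))

@[simp]
theorem completeBell_zero (c : ℕ → R) : completeBell c 0 = 1 := by
  rw [completeBell]

theorem completeBell_succ (c : ℕ → R) (n : ℕ) :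
    completeBell c (n + 1) =
      ∑ ij ∈ antidiagonal n, n.choose ij.1 • (c ij.1 * completeBell c ij.2) := by
  rw [completeBell, Finset.Nat.sum_antidiagonal_eq_sum_range_succ_mk,
    Fin.sum_univ_eq_sum_range fun i ↦ n.choose i • (c i * completeBell c (n - i))]

variable {a : R} {c : ℕ → R}

theorem add_mul_completeBell (hc : ∀ i, a * c i = c i * a + c (i + 1)) (m : ℕ)
    (hcomm : ∀ i < m, Commute (c 0) (c i)) :
    (a + c 0) * completeBell c m = completeBell c m * a + completeBell c (m + 1) := by
  induction m using Nat.strong_induction_on with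
  | _ m ih =>
  cases m with
  | zero => simp [completeBell_succ]
  | succ m =>
    have commutator (i : ℕ) (hi : i ≤ m) : (a + c 0) * c i = c i * (a + c 0) + c (i + 1) := by
      rw [add_mul, hc, (hcomm i (by omega)).eq, mul_add, add_right_comm]
    have summand (i j : ℕ) (hij : i + j = m) :
        (a + c 0) * (c i * completeBell c j) = c i * completeBell c j * a +
          (c i * completeBell c (j + 1) + c (i + 1) * completeBell c j) := by
      rw [← mul_assoc, commutator i (by omega), add_mul, mul_assoc,
        ih j (by omega) fun k hk ↦ hcomm k (by omega), mul_add, ← mul_assoc, add_assoc]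
    have pascal : completeBell c (m + 2) = ∑ ij ∈ antidiagonal m, m.choose ij.1 •
        (c ij.1 * completeBell c (ij.2 + 1) + c (ij.1 + 1) * completeBell c ij.2) := by
      rw [completeBell_succ,
        sum_antidiagonal_choose_succ_nsmul fun i j ↦ c i * completeBell c j,
        ← sum_add_distrib]
      refine sum_congr rfl fun ij hij ↦ ?_
      rw [Nat.choose_symm_of_eq_add (mem_antidiagonal.mp hij).symm, smul_add]
    rw [pascal, completeBell_succ, mul_sum, sum_mul, ← sum_add_distrib]
    refine sum_congr rfl fun ij hij ↦ ?_
    rw [mul_smul_comm, summand _ _ (mem_antidiagonal.mp hij), smul_add, smul_mul_assoc]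

theorem add_pow_eq_sum_completeBell (hc : ∀ i, a * c i = c i * a + c (i + 1)) (n : ℕ)
    (hcomm : ∀ i, i + 2 ≤ n → Commute (c 0) (c i)) :
    (a + c 0) ^ n =
      ∑ ij ∈ antidiagonal n, n.choose ij.1 • (completeBell c ij.2 * a ^ ij.1) := by
  induction n with
  | zero => simp
  | succ n ih =>
    rw [pow_succ', ih fun i hi ↦ hcomm i (by omega), mul_sum,
      sum_antidiagonal_choose_succ_nsmul fun i j ↦ completeBell c j * a ^ i, ← sum_add_distrib]
    refine sum_congr rfl fun ij h_mem ↦ ?_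
    have hij : ij.1 + ij.2 = n := mem_antidiagonal.mp h_mem
    rw [mul_smul_comm, ← mul_assoc,
      add_mul_completeBell hc ij.2 fun i hi ↦ hcomm i (by omega), add_mul, mul_assoc, ← pow_succ',
      ← Nat.choose_symm_of_eq_add hij.symm, smul_add, add_comm]

end CompleteBell

theorem sum_powerset_card_card_sdiff {α M : Type*} [DecidableEq α] [AddCommMonoid M]
    (f : ℕ → ℕ → M) (s : Finset α) :
    ∑ U ∈ s.powerset, f #U #(s \ U) =
      ∑ ij ∈ antidiagonal #s, (#s).choose ij.1 • f ij.1 ij.2 := by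
  rw [Finset.Nat.sum_antidiagonal_eq_sum_range_succ_mk,
    ← sum_powerset_apply_card fun i ↦ f i (#s - i)]
  exact sum_congr rfl fun U hU ↦ by rw [card_sdiff_of_subset (mem_powerset.mp hU)]

section Finpartition

variable {α : Type*} [DecidableEq α] {s t U : Finset α} {x : α}

/-- The partition of `insert x t` in which `x` has the block `insert x U` and the other blocks are
those of a given partition of `t \ U`. -/
@[simps! parts]
def adjoinBlock (hx : x ∉ t) (hU : U ⊆ t) (P : Finpartition (t \ U)) :
    Finpartition (insert x t) :=
  P.extend (b := insert x U) (insert_ne_empty x U)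
    (disjoint_insert_right.mpr ⟨fun h ↦ hx (mem_sdiff.mp h).1, sdiff_disjoint⟩)
    (by rw [sup_eq_union, union_insert, sdiff_union_of_subset hU])

theorem insert_notMem_parts_sdiff (hx : x ∉ t) (P : Finpartition (t \ U)) :
    insert x U ∉ P.parts :=
  fun h ↦ hx (mem_sdiff.mp (P.subset h (mem_insert_self x U))).1

theorem adjoinBlock_injective (hx : x ∉ t) :
    Function.Injective fun p : Σ U : t.powerset, Finpartition (t \ U) ↦
      adjoinBlock hx (mem_powerset.mp p.1.2) p.2 := by
  rintro ⟨⟨U, hU⟩, P⟩ ⟨⟨V, hV⟩, Q⟩ h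
  have part_x {W : Finset α} (hW : W ∈ t.powerset) (P : Finpartition (t \ W)) :
      (adjoinBlock hx (mem_powerset.mp hW) P).part x = insert x W :=
    Finpartition.part_eq_of_mem _ (mem_insert_self _ _) (mem_insert_self _ _)
  have hUV : insert x U = insert x V := by
    rw [← part_x hU P, ← part_x hV Q]
    exact congrArg (Finpartition.part · x) h
  obtain rfl : U = V := by
    rw [← erase_insert (notMem_mono (mem_powerset.mp hU) hx), hUV,
      erase_insert (notMem_mono (mem_powerset.mp hV) hx)]
  have hPQ : P.parts = Q.parts := by
    rw [← erase_insert (insert_notMem_parts_sdiff hx P),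
      ← erase_insert (insert_notMem_parts_sdiff hx Q)]
    exact congrArg (fun P ↦ (Finpartition.parts P).erase (insert x U)) h
  rw [Finpartition.ext hPQ]

theorem sup_parts_erase (P : Finpartition s) {B : Finset α} (hB : B ∈ P.parts) :
    (P.parts.erase B).sup id = s \ B := by
  have hdisj : Disjoint B ((P.parts.erase B).sup id) :=
    supIndep_iff_disjoint_erase.mp P.supIndep B hB
  have hunion : B ∪ (P.parts.erase B).sup id = s := by
    conv_rhs => rw [← P.sup_parts, ← insert_erase hB, sup_insert, id, sup_eq_union]
  rw [← union_sdiff_cancel_left hdisj, hunion]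

theorem adjoinBlock_surjective (hx : x ∉ t) :
    Function.Surjective fun p : Σ U : t.powerset, Finpartition (t \ U) ↦
      adjoinBlock hx (mem_powerset.mp p.1.2) p.2 := by
  intro Q
  have hxQ : x ∈ Q.part x := Q.mem_part (mem_insert_self x t)
  have hQ : Q.part x ∈ Q.parts := Q.part_mem.mpr (mem_insert_self x t)
  have hU : (Q.part x).erase x ⊆ t := subset_insert_iff.mp (Q.part_subset x)
  have hsdiff : insert x t \ Q.part x = t \ (Q.part x).erase x := by
    rw [insert_sdiff_of_mem t hxQ, ← sdiff_insert_of_notMem hx ((Q.part x).erase x),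
      insert_erase hxQ]
  let P : Finpartition (t \ (Q.part x).erase x) :=
    Q.ofSubset (erase_subset (Q.part x) Q.parts) ((sup_parts_erase Q hQ).trans hsdiff)
  refine ⟨⟨⟨(Q.part x).erase x, mem_powerset.mpr hU⟩, P⟩, Finpartition.ext ?_⟩
  simp [P, insert_erase hxQ, insert_erase hQ]

theorem sum_finpartition_insert {M : Type*} [AddCommMonoid M] (hx : x ∉ t)
    (f : Finpartition (insert x t) → M) :
    ∑ Q, f Q = ∑ U : t.powerset, ∑ P, f (adjoinBlock hx (mem_powerset.mp U.2) P) := by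
  rw [← Function.Bijective.sum_comp ⟨adjoinBlock_injective hx, adjoinBlock_surjective hx⟩,
    Fintype.sum_sigma]

theorem pairwise_commute_parts {M : Type*} [Mul M] {c : ℕ → M} (P : Finpartition s)
    (hcomm : ∀ i j, i + j + 2 ≤ #s → Commute (c i) (c j)) :
    (P.parts : Set (Finset α)).Pairwise (Function.onFun Commute fun S ↦ c (#S - 1)) := by
  intro S hS T hT hST
  have hS_pos : 0 < #S := (P.nonempty_of_mem_parts hS).card_pos
  have hT_pos : 0 < #T := (P.nonempty_of_mem_parts hT).card_pos
  have hcard : #S + #T ≤ #s := by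
    rw [← card_union_of_disjoint (show Disjoint S T from P.disjoint hS hT hST)]
    exact card_le_card (union_subset (P.subset hS) (P.subset hT))
  exact hcomm _ _ (by omega)

variable {M : Type*} [Monoid M]

/-- The weight of a set partition: the product over its blocks `S` of `c (#S - 1)`. Two distinct
blocks together have at most `#s` elements, so only the indices in `hcomm` can meet. -/
def blockProd (c : ℕ → M) (hcomm : ∀ i j, i + j + 2 ≤ #s → Commute (c i) (c j))
    (P : Finpartition s) : M :=
  P.parts.noncommProd (fun S ↦ c (#S - 1)) (pairwise_commute_parts P hcomm)

theorem blockProd_adjoinBlock {c : ℕ → M} (hx : x ∉ t) (hU : U ⊆ t)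
    (hcomm : ∀ i j, i + j + 2 ≤ #(insert x t) → Commute (c i) (c j))
    (hcomm' : ∀ i j, i + j + 2 ≤ #(t \ U) → Commute (c i) (c j)) (P : Finpartition (t \ U)) :
    blockProd c hcomm (adjoinBlock hx hU P) = c #U * blockProd c hcomm' P := by
  have hcard : #(insert x U) - 1 = #U := by
    rw [card_insert_of_notMem (notMem_mono hU hx), Nat.add_sub_cancel]
  exact (noncommProd_insert_of_notMem _ _ _ _ (insert_notMem_parts_sdiff hx P)).trans
    (by rw [hcard, blockProd])

theorem sum_blockProd {R : Type*} [Semiring R] {c : ℕ → R} (s : Finset α)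
    (hcomm : ∀ i j, i + j + 2 ≤ #s → Commute (c i) (c j)) :
    ∑ P, blockProd c hcomm P = completeBell c #s := by
  induction s using Finset.strongInduction with
  | H s ih =>
  obtain rfl | ⟨x, hxs⟩ := s.eq_empty_or_nonempty
  · rw [card_empty, completeBell_zero]
    exact (Fintype.sum_unique (ι := Finpartition (⊥ : Finset α)) _).trans (noncommProd_empty _ _)
  obtain ⟨t, hx, rfl⟩ : ∃ t, x ∉ t ∧ insert x t = s :=
    ⟨s.erase x, notMem_erase x s, insert_erase hxs⟩
  have fiber (U : Finset α) (hU : U ⊆ t) :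
      ∑ P, blockProd c hcomm (adjoinBlock hx hU P) = c #U * completeBell c #(t \ U) := by
    have hsub : t \ U ⊂ insert x t := sdiff_subset.trans_ssubset (ssubset_insert hx)
    have hcomm' : ∀ i j, i + j + 2 ≤ #(t \ U) → Commute (c i) (c j) :=
      fun i j hij ↦ hcomm i j (hij.trans (card_le_card hsub.subset))
    simp only [blockProd_adjoinBlock hx hU hcomm hcomm', ← mul_sum, ih _ hsub hcomm']
  rw [sum_finpartition_insert hx, card_insert_of_notMem hx, completeBell_succ,
    ← sum_powerset_card_card_sdiff fun i j ↦ c i * completeBell c j, ← sum_coe_sort t.powerset]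
  exact sum_congr rfl fun U _ ↦ fiber U (mem_powerset.mp U.2)

/-- Identifies `Finpartition s` with the sets of pairwise disjoint nonempty blocks covering `s`, so
that a sum over `Finpartition s` becomes a sum over a filtered double power set. -/
def finpartitionEquiv (s : Finset α) :
    Finpartition s ≃ {P : Finset (Finset α) // P ∈ s.powerset.powerset.filter fun P ↦
      (∀ S ∈ P, S.Nonempty) ∧ (∀ S ∈ P, ∀ T ∈ P, S ≠ T → Disjoint S T) ∧ P.biUnion id = s} where
  toFun P := ⟨P.parts, mem_filter.mpr
    ⟨mem_powerset.mpr fun _ hS ↦ mem_powerset.mpr (P.subset hS),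
      fun _ ↦ P.nonempty_of_mem_parts, fun _ hS _ hT ↦ P.disjoint hS hT, P.biUnion_parts⟩⟩
  invFun P :=
    have hP := (mem_filter.mp P.2).2
    { parts := P
      supIndep := supIndep_iff_pairwiseDisjoint.mpr fun S hS T hT ↦ hP.2.1 S hS T hT
      sup_parts := (sup_eq_biUnion _ _).trans hP.2.2
      bot_notMem := fun h ↦ not_nonempty_empty (hP.1 ∅ h) }

end Finpartition

theorem statement0_general {R α : Type*} [Semiring R] [DecidableEq α] (a : R) (c : ℕ → R)
    (hc : ∀ i, a * c i = c i * a + c (i + 1)) (s : Finset α)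
    (hcomm : ∀ i j, i + j + 2 ≤ #s → Commute (c i) (c j)) :
    (a + c 0) ^ #s =
      ∑ S₀ ∈ s.powerset, ∑ P : Finpartition (s \ S₀),
        blockProd c (fun i j h ↦ hcomm i j (h.trans (card_le_card sdiff_subset))) P *
          a ^ #S₀ := by
  rw [add_pow_eq_sum_completeBell hc #s fun i hi ↦ hcomm 0 i (by omega),
    ← sum_powerset_card_card_sdiff fun i j ↦ completeBell c j * a ^ i]
  simp only [← sum_mul, sum_blockProd]

open Finset in
/-- Let `R` be an associative unital (possibly noncommutative)
ring, `a b ∈ R`, and define the iterated commutators `b₀ = b`,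
`b_{i+1} = a * b_i - b_i * a`.  Fix `n ≥ 0` and assume that `b_i` and `b_j`
commute for all `0 ≤ i, j ≤ n - 1`.  Then `(a + b) ^ n` equals the sum, over
all pairs `(S₀, π)` where `S₀` is a subset of `{1, …, n}` (here realized as
`Finset.range n`) and `π` is a partition of its complement into nonempty
pairwise disjoint blocks, of `(∏_{S ∈ π} b_{|S| - 1}) * a ^ |S₀|`, the product
over the blocks being well defined since the factors commute pairwise. -/
theorem statement0 {R : Type*} [Ring R] (a b : R) (bIter : ℕ → R)
    (hb0 : bIter 0 = b)
    (hbsucc : ∀ i, bIter (i + 1) = a * bIter i - bIter i * a)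
    (n : ℕ)
    (hcomm : ∀ i ≤ n - 1, ∀ j ≤ n - 1, bIter i * bIter j = bIter j * bIter i) :
    (a + b) ^ n =
      ∑ S₀ ∈ (range n).powerset,
        ∑ P ∈ (((range n \ S₀).powerset.powerset).filter
            (fun P : Finset (Finset ℕ) =>
              (∀ S ∈ P, S.Nonempty) ∧
              (∀ S ∈ P, ∀ T ∈ P, S ≠ T → Disjoint S T) ∧
              P.biUnion id = range n \ S₀)).attach,
          (P.1.noncommProd (fun S => bIter (S.card - 1))
            (by
              intro S hS T hT _
              simp only [Finset.mem_coe] at hS hT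
              have hP := Finset.mem_filter.mp P.2
              have hsub : ∀ U ∈ P.1, U ⊆ range n \ S₀ := fun U hU =>
                Finset.mem_powerset.mp (Finset.mem_powerset.mp hP.1 hU)
              have hcard : ∀ U ∈ P.1, U.card - 1 ≤ n - 1 := by
                intro U hU
                have h1 : U.Nonempty := hP.2.1 U hU
                have h2 : U ⊆ range n :=
                  (hsub U hU).trans (Finset.sdiff_subset)
                have h3 : U.card ≤ n := by
                  simpa using Finset.card_le_card h2
                omega
              exact hcomm _ (hcard S hS) _ (hcard T hT))) * a ^ S₀.card := by
  have hbracket (i : ℕ) : a * bIter i = bIter i * a + bIter (i + 1) := by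
    rw [hbsucc, add_sub_cancel]
  have hcomm' (i j : ℕ) (hij : i + j + 2 ≤ #(range n)) : Commute (bIter i) (bIter j) := by
    rw [card_range] at hij
    exact hcomm i (by omega) j (by omega)
  conv_lhs => rw [← hb0, ← card_range n, statement0_general a bIter hbracket (range n) hcomm']
  exact sum_congr rfl fun S₀ _ ↦ Fintype.sum_equiv (finpartitionEquiv _) _ _ fun _ ↦ rfl
end

section
/- Let p be a prime and let R be an associative unital (possibly noncommutative) ring of characteristic p (p·x = 0 for every x ∈ R). Let a, b ∈ R, and define the iterated commutators b_0 = b and b_{i+1} = a*b_i − b_i*a. If b_i*b_j = b_j*b_i for all 0 ≤ i, j ≤ p−1, then (a+b)^p = a^p + b_{p−1} + b^p. -/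
/-!
Put `f = a + b t ∈ R[t]` and let `D = d/dt`. Left and right multiplication by `f` commute, so in
characteristic `p` the noncommutative Leibniz rule reads
`D (f ^ p) = ∑ i < p, f ^ i * D f * f ^ (p - 1 - i) = (ad f) ^ (p - 1) (D f)`.
Since `b` commutes with its iterated commutators, the right-hand side is the constant `b_{p-1}`.
As `2, …, p - 1` are invertible modulo `p`, this forces `f ^ p = a ^ p + b_{p-1} t + b ^ p t ^ p`;
evaluate at `t = 1`.
-/

open Finset LieAlgebra Polynomial

attribute [local instance] LieRing.ofAssociativeRing

section NoncommutativePolynomial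

variable {R : Type*} [Semiring R]

theorem derivative_pow_eq_sum (f : R[X]) (n : ℕ) :
    derivative (f ^ n) = ∑ i ∈ range n, f ^ i * derivative f * f ^ (n - 1 - i) := by
  induction n with
  | zero => simp
  | succ n ih =>
    rw [pow_succ', derivative_mul, ih, mul_sum, sum_range_succ', add_comm]
    congr 1
    · refine sum_congr rfl fun i _ => ?_
      rw [pow_succ', show n + 1 - 1 - (i + 1) = n - 1 - i by lia]
      simp only [mul_assoc]
    · simp

theorem eval_one_pow (f : R[X]) (n : ℕ) : (f ^ n).eval 1 = f.eval 1 ^ n :=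
  map_pow (eval₂RingHom' (RingHom.id R) 1 Commute.one_right) f n

end NoncommutativePolynomial

section PrimeCharacteristic

variable {R : Type*} [Ring R] {p : ℕ}

theorem natCast_choose_prime_sub_one (hp : p.Prime) (hR : (p : R) = 0) {i : ℕ} (hi : i < p) :
    ((p - 1).choose i : R) = (-1) ^ i := by
  induction i with
  | zero => simp
  | succ i ih =>
    have pascal : p.choose (i + 1) = (p - 1).choose i + (p - 1).choose (i + 1) := by
      rw [← Nat.choose_succ_succ, Nat.succ_eq_add_one, Nat.sub_add_cancel hp.one_le]
    have choose_eq_zero : (p.choose (i + 1) : R) = 0 := by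
      obtain ⟨m, hm⟩ := hp.dvd_choose_self i.succ_ne_zero hi
      rw [hm, Nat.cast_mul, hR, zero_mul]
    rw [pascal, Nat.cast_add, ih (by lia)] at choose_eq_zero
    rw [eq_neg_of_add_eq_zero_right choose_eq_zero, pow_succ, mul_neg_one]

theorem sub_pow_prime_sub_one_of_commute (hp : p.Prime) (hR : (p : R) = 0) {x y : R}
    (h : Commute x y) : (x - y) ^ (p - 1) = ∑ i ∈ range p, x ^ i * y ^ (p - 1 - i) := by
  rw [sub_eq_add_neg, h.neg_right.add_pow, Nat.sub_add_cancel hp.one_le]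
  refine sum_congr rfl fun i hi => ?_
  rw [mem_range] at hi
  rw [← Nat.choose_symm (by lia : i ≤ p - 1), natCast_choose_prime_sub_one hp hR (by lia),
    mul_assoc, ← (Commute.neg_one_right (-y)).mul_pow, neg_mul_neg, mul_one]

theorem ad_pow_prime_sub_one (K : Type*) [CommRing K] [Algebra K R] (hp : p.Prime)
    (hR : (p : R) = 0) (x y : R) :
    (ad K R x ^ (p - 1)) y = ∑ i ∈ range p, x ^ i * y * x ^ (p - 1 - i) := by
  have hEnd : (p : Module.End K R) = 0 := by
    ext z
    simp [nsmul_eq_mul, hR]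
  have ad_eq : ad K R x = LinearMap.mulLeft K x - LinearMap.mulRight K x :=
    congrFun (ad_eq_lmul_left_sub_lmul_right R) x
  rw [ad_eq, sub_pow_prime_sub_one_of_commute hp hEnd (LinearMap.commute_mulLeft_right x x)]
  simp [LinearMap.pow_mulLeft, LinearMap.pow_mulRight, mul_assoc]

theorem derivative_pow_prime (K : Type*) [CommRing K] [Algebra K R] (hp : p.Prime)
    (hR : (p : R) = 0) (f : R[X]) :
    derivative (f ^ p) = (ad K R[X] f ^ (p - 1)) (derivative f) := by
  have hpoly : (p : R[X]) = 0 := by rw [← C_eq_natCast, hR, C_0]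
  rw [derivative_pow_eq_sum, ad_pow_prime_sub_one K hp hpoly]

theorem eq_of_natDegree_le_prime_of_derivative_eq_C (hp : p.Prime) (hR : (p : R) = 0) {f : R[X]}
    {c : R} (hdeg : f.natDegree ≤ p) (hf : derivative f = C c) :
    f = C (f.coeff 0) + C c * X + C (f.coeff p) * X ^ p := by
  have succ_nsmul_coeff (n : ℕ) : (n + 1) • f.coeff (n + 1) = if n = 0 then c else 0 := by
    rw [← coeff_C, ← hf, coeff_derivative, nsmul_eq_mul, Nat.cast_comm, Nat.cast_succ]
  have coeff_one : f.coeff 1 = c := by simpa using succ_nsmul_coeff 0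
  have coeff_eq_zero {n : ℕ} (hn : 1 < n) (hnp : n ≠ p) : f.coeff n = 0 := by
    rcases hnp.lt_or_gt with hlt | hgt
    · have nsmul_coeff : n • f.coeff n = 0 := by
        obtain ⟨m, rfl⟩ := Nat.exists_eq_add_of_lt hn
        simpa [add_comm] using succ_nsmul_coeff (m + 1)
      have prime_nsmul_coeff : p • f.coeff n = 0 := by rw [nsmul_eq_mul, hR, zero_mul]
      exact (nsmul_eq_zero_iff_of_coprime (Nat.coprime_of_lt_prime (by lia) hlt hp)).1
        ⟨prime_nsmul_coeff, nsmul_coeff⟩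
    · exact coeff_eq_zero_of_natDegree_lt (hdeg.trans_lt hgt)
  have hp1 := hp.one_lt
  ext n
  rcases lt_trichotomy n 1 with hn | rfl | hn
  · obtain rfl : n = 0 := by lia
    simp [coeff_X_pow, hp.ne_zero.symm]
  · simp [coeff_X_pow, coeff_C, coeff_one, hp1.ne]
  · by_cases hnp : n = p
    · simp [coeff_X, coeff_X_pow, coeff_C, hnp, hp1.ne, hp.ne_zero]
    · have hn0 : n ≠ 0 := by lia
      simp [coeff_X, coeff_X_pow, coeff_C, hn0, hn.ne, hnp, coeff_eq_zero hn hnp]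

end PrimeCharacteristic

section IteratedCommutator

variable (K : Type*) {R : Type*} [CommRing K] [Ring R] [Algebra K R] {a : R}

theorem ad_pow_C_add_C_mul_X_apply_C {b c : R} {n : ℕ}
    (hcomm : ∀ i < n, Commute b ((ad K R a ^ i) c)) :
    (ad K R[X] (C a + C b * X) ^ n) (C c) = C ((ad K R a ^ n) c) := by
  induction n with
  | zero => simp
  | succ n ih =>
    have hbX : Commute (C b * X) (C ((ad K R a ^ n) c)) :=
      ((hcomm n n.lt_succ_self).map C).mul_left (commute_X _)
    rw [pow_succ', Module.End.mul_apply, ih fun i hi => hcomm i (hi.trans n.lt_succ_self),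
      pow_succ', Module.End.mul_apply, ad_apply, ad_apply, add_lie, hbX.lie_eq, add_zero]
    simp only [Ring.lie_def, C_sub, C_mul]

theorem eq_ad_pow_of_succ {c : ℕ → R} (hsucc : ∀ i, c (i + 1) = a * c i - c i * a) (i : ℕ) :
    c i = (ad K R a ^ i) (c 0) := by
  induction i with
  | zero => simp
  | succ i ih => rw [hsucc, pow_succ', Module.End.mul_apply, ← ih, ad_apply, Ring.lie_def]

end IteratedCommutator

theorem statement1_general {R : Type*} [Ring R] {p : ℕ} (hp : p.Prime) (hR : (p : R) = 0)
    {a b : R} (hcomm : ∀ i < p - 1, Commute b ((ad ℤ R a ^ i) b)) :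
    (a + b) ^ p = a ^ p + (ad ℤ R a ^ (p - 1)) b + b ^ p := by
  let f : R[X] := C a + C b * X
  have hdeg : f.natDegree ≤ 1 := by
    simp only [f]
    compute_degree
  have hderiv : derivative (f ^ p) = C ((ad ℤ R a ^ (p - 1)) b) := by
    rw [derivative_pow_prime ℤ hp hR, ← ad_pow_C_add_C_mul_X_apply_C ℤ hcomm]
    simp [f]
  have hdeg_pow : (f ^ p).natDegree ≤ p := by simpa using natDegree_pow_le_of_le p hdeg
  have hcoeff_zero : (f ^ p).coeff 0 = a ^ p := by
    simpa [f] using map_pow constantCoeff f p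
  have hcoeff_top : (f ^ p).coeff p = b ^ p := by
    simpa [f, coeff_C] using coeff_pow_of_natDegree_le (m := p) hdeg
  calc (a + b) ^ p = (f ^ p).eval 1 := by simp [eval_one_pow, f]
    _ = a ^ p + (ad ℤ R a ^ (p - 1)) b + b ^ p := by
      rw [eq_of_natDegree_le_prime_of_derivative_eq_C hp hR hdeg_pow hderiv, hcoeff_zero,
        hcoeff_top]
      simp [eval_one_pow]

/-- Let `p` be a prime and `R` an associative unital (possibly
noncommutative) ring of characteristic `p` (`p • x = 0` for every `x`).  Let
`a, b ∈ R` and define the iterated commutators `b₀ = b`,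
`b_{i+1} = a * b_i - b_i * a`.  If `b_i` and `b_j` commute for all
`0 ≤ i, j ≤ p - 1`, then `(a + b) ^ p = a ^ p + b_{p-1} + b ^ p`. -/
theorem statement1 {R : Type*} [Ring R] (p : ℕ) (hp : p.Prime)
    (hchar : ∀ x : R, p • x = 0)
    (a b : R) (bIter : ℕ → R)
    (hb0 : bIter 0 = b)
    (hbsucc : ∀ i, bIter (i + 1) = a * bIter i - bIter i * a)
    (hcomm : ∀ i ≤ p - 1, ∀ j ≤ p - 1, bIter i * bIter j = bIter j * bIter i) :
    (a + b) ^ p = a ^ p + bIter (p - 1) + b ^ p := by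
  obtain rfl : bIter = fun i => (ad ℤ R a ^ i) b := funext (hb0 ▸ eq_ad_pow_of_succ ℤ hbsucc)
  exact statement1_general hp (by simpa using hchar 1) fun i hi => hcomm 0 (Nat.zero_le _) i hi.le
end

section
/- Let R be a commutative ring, A a commutative R-algebra, D an R-derivation of A, and a ∈ A. In the ring of R-linear endomorphisms of A, write L_x for the operator of multiplication by x ∈ A, and set T = L_a + D. Define b_i = T^i(1) for i ≥ 0. Then for every k ≥ 0 one has the operator identity T^k = Σ_{i=0}^{k} (k choose i) · (L_{b_i} ∘ D^{k−i}), where D^{k−i} denotes the (k−i)-fold composite of the underlying linear map of D. -/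
/-!
The operator `T = L_a + D` satisfies the twisted Leibniz rule `T (x * y) = T x * y + x * D y`. In
other words, multiplication `A ⊗ A → A` intertwines `T` with `T ⊗ 1 + 1 ⊗ D`, a sum of commuting
operators. The binomial theorem expands `(T ⊗ 1 + 1 ⊗ D) ^ k`, and evaluating the resulting formula
for `T ^ k (x * y)` at `x = 1` gives the operator identity.
-/

section IteratedLeibniz

open scoped TensorProduct

variable {R M N P : Type*} [CommSemiring R] [AddCommMonoid M] [AddCommMonoid N] [AddCommMonoid P]
  [Module R M] [Module R N] [Module R P]

theorem rTensor_add_lTensor_pow_tmul (S : Module.End R M) (U : Module.End R N) (k : ℕ)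
    (m : M) (n : N) :
    ((S.rTensor N + U.lTensor M) ^ k) (m ⊗ₜ[R] n) =
      ∑ i ∈ Finset.range (k + 1), k.choose i • ((S ^ i) m ⊗ₜ[R] (U ^ (k - i)) n) := by
  have h_comm : Commute (S.rTensor N) (U.lTensor M) :=
    (LinearMap.rTensor_comp_lTensor M S U).trans (LinearMap.lTensor_comp_rTensor M S U).symm
  rw [h_comm.add_pow', Finset.Nat.sum_antidiagonal_eq_sum_range_succ
    fun i j ↦ k.choose i • (S.rTensor N ^ i * U.lTensor M ^ j)]
  simp only [LinearMap.rTensor_pow, LinearMap.lTensor_pow, LinearMap.sum_apply,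
    LinearMap.smul_apply, Module.End.mul_apply, LinearMap.lTensor_tmul, LinearMap.rTensor_tmul]

theorem pow_apply_bilin_of_leibniz (B : M →ₗ[R] N →ₗ[R] P) {S : Module.End R M}
    {U : Module.End R N} {T : Module.End R P} (hT : ∀ m n, T (B m n) = B (S m) n + B m (U n))
    (k : ℕ) (m : M) (n : N) :
    (T ^ k) (B m n) = ∑ i ∈ Finset.range (k + 1), k.choose i • B ((S ^ i) m) ((U ^ (k - i)) n) := by
  have h_intertwine : T ∘ₗ TensorProduct.lift B =
      TensorProduct.lift B ∘ₗ (S.rTensor N + U.lTensor M) :=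
    TensorProduct.ext' fun m n ↦ by simp [hT]
  calc (T ^ k) (B m n)
      = TensorProduct.lift B (((S.rTensor N + U.lTensor M) ^ k) (m ⊗ₜ[R] n)) :=
        LinearMap.congr_fun (Module.End.commute_pow_left_of_commute h_intertwine k) (m ⊗ₜ[R] n)
    _ = ∑ i ∈ Finset.range (k + 1), k.choose i • B ((S ^ i) m) ((U ^ (k - i)) n) := by
        simp only [rTensor_add_lTensor_pow_tmul, map_sum, map_nsmul, TensorProduct.lift.tmul]

end IteratedLeibniz

theorem mulLeft_add_apply_mul {R A : Type*} [Semiring R] [NonUnitalSemiring A] [Module R A]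
    [SMulCommClass R A A] {D : Module.End R A} (hD : ∀ x y, D (x * y) = x * D y + D x * y)
    (a x y : A) :
    (LinearMap.mulLeft R a + D) (x * y) = (LinearMap.mulLeft R a + D) x * y + x * D y := by
  simp only [LinearMap.add_apply, LinearMap.mulLeft_apply, hD, add_mul, mul_assoc]
  abel

theorem statement2_general {R A : Type*} [CommSemiring R] [Semiring A] [Algebra R A]
    {D : Module.End R A} (hD : ∀ x y, D (x * y) = x * D y + D x * y) (a : A) (k : ℕ) :
    (LinearMap.mulLeft R a + D) ^ k =
      ∑ i ∈ Finset.range (k + 1), k.choose i •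
        (LinearMap.mulLeft R (((LinearMap.mulLeft R a + D) ^ i) 1) * D ^ (k - i)) := by
  ext y
  simpa [LinearMap.sum_apply] using
    pow_apply_bilin_of_leibniz (LinearMap.mul R A) (mulLeft_add_apply_mul hD a) k 1 y

/-- Let `R` be a commutative ring, `A` a commutative `R`-algebra,
`D` an `R`-derivation of `A` and `a ∈ A`.  Writing `L_x` for the multiplication
operator by `x` and setting `T = L_a + D`, `b i = T^i 1`, one has for every `k`
the operator identity `T ^ k = ∑_{i=0}^{k} (k choose i) • (L_{b i} ∘ D ^ (k - i))`. -/
theorem statement2 {R A : Type*} [CommRing R] [CommRing A] [Algebra R A]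
    (D : Derivation R A A) (a : A) (b : ℕ → A)
    (hb : ∀ i, b i = ((LinearMap.mulLeft R a + (D : A →ₗ[R] A)) ^ i) 1)
    (k : ℕ) :
    (LinearMap.mulLeft R a + (D : A →ₗ[R] A)) ^ k =
      ∑ i ∈ Finset.range (k + 1),
        (k.choose i) • (LinearMap.mulLeft R (b i) * (D : A →ₗ[R] A) ^ (k - i)) := by
  simp only [hb]
  exact statement2_general (fun x y ↦ by simp [mul_comm]) a k
end

section
/- Let p be a prime, R a commutative ring, and A a commutative R-algebra of characteristic p. Let D be an R-derivation of A. Then the p-fold composite D^p of the underlying linear map of D again satisfies the Leibniz rule: D^p(xy) = x·D^p(y) + D^p(x)·y for all x, y ∈ A; consequently D^p is an R-derivation of A. -/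
/-!
Let `T = d₁ ⊗ 1 + 1 ⊗ d₂` on `M ⊗ N`. The Leibniz rule for a bilinear map `f : M × N → P` says
that the linear map `M ⊗ N → P` induced by `f` intertwines `T` with `d₃`, hence also every power
of `T` with the same power of `d₃`. As `d₁ ⊗ 1` and `1 ⊗ d₂` commute, the binomial theorem gives
`T ^ p ^ n = d₁ ^ p ^ n ⊗ 1 + 1 ⊗ d₂ ^ p ^ n` modulo `p`, which is the Leibniz rule for the
`p ^ n`-th powers when `p` kills `P`. A derivation is the case where `f` is the multiplication.
-/

open scoped TensorProduct

/-- The Leibniz rule along a bilinear map `f`, for endomorphisms `d₁`, `d₂` of its two source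
modules and `d₃` of its target. Allowing three different modules makes the rule a statement about
the linear map induced by `f` on the tensor product. -/
def SatisfiesLeibniz {R M N P : Type*} [CommSemiring R] [AddCommMonoid M] [AddCommMonoid N]
    [AddCommMonoid P] [Module R M] [Module R N] [Module R P] (f : M →ₗ[R] N →ₗ[R] P)
    (d₁ : Module.End R M) (d₂ : Module.End R N) (d₃ : Module.End R P) : Prop :=
  ∀ x y, d₃ (f x y) = f x (d₂ y) + f (d₁ x) y

section

variable {R M N P : Type*} [CommSemiring R] [AddCommMonoid M] [AddCommMonoid N]
  [AddCommMonoid P] [Module R M] [Module R N] [Module R P] {f : M →ₗ[R] N →ₗ[R] P}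
  {d₁ : Module.End R M} {d₂ : Module.End R N} {d₃ : Module.End R P}

theorem commute_rTensor_lTensor (d₁ : Module.End R M) (d₂ : Module.End R N) :
    Commute (d₁.rTensor N) (d₂.lTensor M) := by
  rw [commute_iff_eq, Module.End.mul_eq_comp, Module.End.mul_eq_comp,
    LinearMap.rTensor_comp_lTensor, LinearMap.lTensor_comp_rTensor]

theorem exists_rTensor_add_lTensor_pow_prime_pow_eq {p : ℕ} (hp : p.Prime)
    (d₁ : Module.End R M) (d₂ : Module.End R N) (n : ℕ) :
    ∃ S : Module.End R (M ⊗[R] N), (d₁.rTensor N + d₂.lTensor M) ^ p ^ n =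
      (d₁ ^ p ^ n).rTensor N + (d₂ ^ p ^ n).lTensor M + p • S := by
  obtain ⟨S, hS⟩ := (commute_rTensor_lTensor d₁ d₂).exists_add_pow_prime_pow_eq hp n
  refine ⟨d₁.rTensor N * d₂.lTensor M * S, ?_⟩
  rw [hS, LinearMap.rTensor_pow, LinearMap.lTensor_pow, nsmul_eq_mul, mul_assoc, mul_assoc,
    mul_assoc]

theorem SatisfiesLeibniz.lift_comp_pow (h : SatisfiesLeibniz f d₁ d₂ d₃) (k : ℕ) :
    TensorProduct.lift f ∘ₗ ((d₁.rTensor N + d₂.lTensor M) ^ k : Module.End R (M ⊗[R] N)) =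
      (d₃ ^ k : Module.End R P) ∘ₗ TensorProduct.lift f := by
  refine (Module.End.commute_pow_left_of_commute (TensorProduct.ext' fun x y ↦ ?_) k).symm
  simpa [add_comm] using h x y

theorem statement4_general {p : ℕ} (hp : p.Prime) (hP : ∀ z : P, p • z = 0)
    (h : SatisfiesLeibniz f d₁ d₂ d₃) (n : ℕ) :
    SatisfiesLeibniz f (d₁ ^ p ^ n) (d₂ ^ p ^ n) (d₃ ^ p ^ n) := by
  intro x y
  obtain ⟨S, hS⟩ := exists_rTensor_add_lTensor_pow_prime_pow_eq hp d₁ d₂ n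
  calc (d₃ ^ p ^ n) (f x y)
      = TensorProduct.lift f (((d₁.rTensor N + d₂.lTensor M) ^ p ^ n) (x ⊗ₜ y)) :=
        (LinearMap.congr_fun (h.lift_comp_pow (p ^ n)) (x ⊗ₜ y)).symm
    _ = f ((d₁ ^ p ^ n) x) y + f x ((d₂ ^ p ^ n) y) + p • TensorProduct.lift f (S (x ⊗ₜ y)) := by
        simp [hS]
    _ = f x ((d₂ ^ p ^ n) y) + f ((d₁ ^ p ^ n) x) y := by
        rw [hP, add_zero, add_comm]

end

theorem satisfiesLeibniz_derivation {R A : Type*} [CommSemiring R] [CommSemiring A] [Algebra R A]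
    (D : Derivation R A A) : SatisfiesLeibniz (LinearMap.mul R A) (D : A →ₗ[R] A) D D := by
  intro x y
  simp [mul_comm (D x)]

/-- Let `p` be a prime, `R` a commutative ring and `A` a
commutative `R`-algebra of characteristic `p`.  For an `R`-derivation `D` of
`A`, the `p`-fold composite `D ^ p` of the underlying linear map again
satisfies the Leibniz rule, hence is an `R`-derivation of `A`. -/
theorem statement4 {R A : Type*} [CommRing R] [CommRing A] [Algebra R A]
    (p : ℕ) (hp : p.Prime) [CharP A p]
    (D : Derivation R A A) :
    ∀ x y : A, ((D : A →ₗ[R] A) ^ p) (x * y) =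
      x * (((D : A →ₗ[R] A) ^ p) y) + (((D : A →ₗ[R] A) ^ p) x) * y := by
  intro x y
  simpa using statement4_general hp (by simp) (satisfiesLeibniz_derivation D) 1 x y
end

section
/- Let p be a prime, R a commutative ring, and A a commutative R-algebra of characteristic p. Let T be an R-linear endomorphism of A such that for every a ∈ A there exists c ∈ A with T ∘ L_a − L_a ∘ T = L_c, where L_x denotes multiplication by x. Then the p-fold composite T^p has the same property: for every a ∈ A there exists c' ∈ A with T^p ∘ L_a − L_a ∘ T^p = L_{c'}. (This says: the p-th power of a differential operator of order ≤ 1 on A is again a differential operator of order ≤ 1.) -/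
/-!
In a ring of characteristic `p`, left and right multiplication by `x` commute, so Frobenius applied
to their difference `ad x` gives `ad x ^ p = ad (x ^ p)`. Hence every set stable under `ad x` is
stable under `ad (x ^ p)`. The hypothesis on `T` says that the set of multiplication operators is
stable under `ad T`.
-/

theorem expChar_moduleEnd (R A : Type*) [CommSemiring R] [Semiring A] [Algebra R A]
    (p : ℕ) [ExpChar A p] : ExpChar (Module.End R A) p :=
  expChar_of_injective_ringHom (f := (Algebra.lmul R A).toRingHom) Algebra.lmul_injective p

section

attribute [local instance] LieRing.ofAssociativeRing

theorem ad_pow_expChar_pow (R : Type*) {E : Type*} [CommRing R] [Ring E] [Algebra R E]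
    (p : ℕ) [ExpChar E p] (n : ℕ) (x : E) :
    LieAlgebra.ad R E (x ^ p ^ n) = LieAlgebra.ad R E x ^ p ^ n := by
  have := expChar_moduleEnd R E p
  have ad_eq (y : E) :
      LieAlgebra.ad R E y = LinearMap.mulLeft R y - LinearMap.mulRight R y :=
    congrFun (LieAlgebra.ad_eq_lmul_left_sub_lmul_right E) y
  rw [ad_eq, ad_eq, sub_pow_expChar_pow_of_commute p n (LinearMap.commute_mulLeft_right x x),
    LinearMap.pow_mulLeft, LinearMap.pow_mulRight]

theorem mapsTo_lie_pow_expChar_pow {E : Type*} [Ring E] (p n : ℕ) [ExpChar E p] {x : E}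
    {S : Set E} (hS : Set.MapsTo (fun y ↦ ⁅x, y⁆) S S) :
    Set.MapsTo (fun y ↦ ⁅x ^ p ^ n, y⁆) S S := by
  intro y hy
  have iterate_mem : (LieAlgebra.ad ℤ E x ^ p ^ n) y ∈ S := by
    rw [Module.End.pow_apply]
    exact hS.iterate (p ^ n) hy
  rwa [← ad_pow_expChar_pow, LieAlgebra.ad_apply] at iterate_mem

theorem statement5_general {R A : Type*} [CommSemiring R] [Ring A] [Algebra R A]
    (p n : ℕ) [ExpChar A p] (T : A →ₗ[R] A)
    (hT : ∀ a : A, ∃ c : A,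
      T * LinearMap.mulLeft R a - LinearMap.mulLeft R a * T = LinearMap.mulLeft R c) (a : A) :
    ∃ c : A, T ^ p ^ n * LinearMap.mulLeft R a - LinearMap.mulLeft R a * T ^ p ^ n =
      LinearMap.mulLeft R c := by
  have := expChar_moduleEnd R A p
  have mapsTo_range : Set.MapsTo (fun F : Module.End R A ↦ ⁅T, F⁆)
      (Set.range (LinearMap.mulLeft R)) (Set.range (LinearMap.mulLeft R)) := by
    rintro _ ⟨b, rfl⟩
    obtain ⟨c, hc⟩ := hT b
    exact ⟨c, hc.symm⟩
  obtain ⟨c, hc⟩ := mapsTo_lie_pow_expChar_pow p n mapsTo_range ⟨a, rfl⟩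
  exact ⟨c, hc.symm⟩

end

/-- Let `p` be a prime, `R` a commutative ring and `A` a
commutative `R`-algebra of characteristic `p`.  Let `T` be an `R`-linear
endomorphism of `A` such that for every `a ∈ A` the commutator
`T ∘ L_a - L_a ∘ T` is multiplication by some element of `A` (i.e. `T` is a
differential operator of order `≤ 1`).  Then `T ^ p` has the same property. -/
theorem statement5 {R A : Type*} [CommRing R] [CommRing A] [Algebra R A]
    (p : ℕ) (hp : p.Prime) [CharP A p]
    (T : A →ₗ[R] A)
    (hT : ∀ a : A, ∃ c : A,
      T * LinearMap.mulLeft R a - LinearMap.mulLeft R a * T = LinearMap.mulLeft R c) :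
    ∀ a : A, ∃ c' : A,
      T ^ p * LinearMap.mulLeft R a - LinearMap.mulLeft R a * T ^ p =
        LinearMap.mulLeft R c' := by
  have : ExpChar A p := ExpChar.prime hp
  simpa only [pow_one] using statement5_general p 1 T hT
end

section
/- Let p be a prime, R a commutative ring, A a commutative R-algebra of characteristic p, and M an A-module. Let ∇ be a connection on M, i.e., a map assigning to each R-derivation D of A an R-linear endomorphism ∇_D of M such that ∇_{D+E} = ∇_D + ∇_E, ∇_{a•D}(m) = a•(∇_D m), and ∇_D(a•m) = (D a)•m + a•(∇_D m) for all a ∈ A, m ∈ M. For an R-derivation D, let D^{[p]} denote the R-derivation of A whose underlying linear map is the p-fold composite of D, and define the p-curvature ψ(D) := (∇_D)^p − ∇_{D^{[p]}} ∈ End_R(M). Then for every R-derivation D of A, ψ(D) is A-linear: ψ(D)(a•m) = a•(ψ(D)(m)) for all a ∈ A, m ∈ M. -/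
/-!
Iterating the Leibniz rule for `∇_D` gives the binomial formula
`∇_D ^ n (a • m) = ∑ (n choose i) D^i a • ∇_D^(n - i) m`. For `n = p` the coefficients with
`0 < i < p` are divisible by `p`, so that `∇_D ^ p` again obeys a Leibniz rule, now along `D^p`.
As `∇_{D^[p]}` obeys the same rule, the inhomogeneous terms cancel in the difference.
-/

open Finset.HasAntidiagonal (antidiagonal mem_antidiagonal)

/-- The Leibniz rule obeyed by the covariant derivative `∇_D` of a connection. `D` is a bare
self-map of `A`, so that the notion also makes sense for iterates of a derivation. -/
def IsLeibnizAlong {R A M : Type*} [Semiring R] [AddCommMonoid M] [Module R M] [SMul A M]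
    (D : A → A) (N : Module.End R M) : Prop :=
  ∀ (a : A) (m : M), N (a • m) = D a • m + a • N m

theorem sum_antidiagonal_choose_nsmul_of_prime {M : Type*} [AddCommMonoid M] {p : ℕ}
    (hp : p.Prime) (hM : ∀ m : M, p • m = 0) (f : ℕ × ℕ → M) :
    ∑ ij ∈ antidiagonal p, p.choose ij.1 • f ij = f (p, 0) + f (0, p) := by
  have middle_eq_zero (ij : ℕ × ℕ) (hij : ij ∈ antidiagonal p)
      (hne : ij ≠ (p, 0) ∧ ij ≠ (0, p)) : p.choose ij.1 • f ij = 0 := by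
    obtain ⟨i, j⟩ := ij
    simp only [mem_antidiagonal, ne_eq, Prod.mk.injEq] at hij hne
    obtain ⟨k, hk⟩ : p ∣ p.choose i := hp.dvd_choose_self (by lia) (by lia)
    rw [hk, mul_nsmul', hM]
  rw [Finset.sum_eq_add (p, 0) (0, p) (by simp [hp.ne_zero]) middle_eq_zero
    (by simp) (by simp)]
  simp

theorem nsmul_eq_zero_of_charP (A : Type*) {M : Type*} [Semiring A] [AddCommMonoid M]
    [Module A M] (p : ℕ) [CharP A p] (m : M) : p • m = 0 := by
  rw [← Nat.cast_smul_eq_nsmul A, CharP.cast_eq_zero, zero_smul]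

namespace IsLeibnizAlong

section Iterate

variable {R A M : Type*} [Semiring R] [AddCommMonoid M] [Module R M] [SMul A M]
  {D : A → A} {N : Module.End R M}

theorem pow_apply_smul (h : IsLeibnizAlong D N) (n : ℕ) (a : A) (m : M) :
    (N ^ n) (a • m) =
      ∑ ij ∈ antidiagonal n, n.choose ij.1 • (D^[ij.1] a • (N ^ ij.2) m) := by
  induction n with
  | zero => simp
  | succ n ih =>
    rw [Finset.sum_antidiagonal_choose_succ_nsmul (fun i j => D^[i] a • (N ^ j) m) n,
      pow_succ', Module.End.mul_apply, ih, map_sum, ← Finset.sum_add_distrib]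
    refine Finset.sum_congr rfl fun ij hij => ?_
    have choose_symm : n.choose ij.2 = n.choose ij.1 :=
      (Nat.choose_symm_of_eq_add (mem_antidiagonal.mp hij).symm).symm
    rw [map_nsmul, h, nsmul_add, choose_symm, Function.iterate_succ_apply', pow_succ',
      Module.End.mul_apply, add_comm]

theorem pow_prime (h : IsLeibnizAlong D N) {p : ℕ} (hp : p.Prime) (hM : ∀ m : M, p • m = 0) :
    IsLeibnizAlong D^[p] (N ^ p) := fun a m => by
  rw [h.pow_apply_smul, sum_antidiagonal_choose_nsmul_of_prime hp hM
    (fun ij => D^[ij.1] a • (N ^ ij.2) m)]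
  simp only [pow_zero, Module.End.one_apply, Function.iterate_zero_apply]

end Iterate

theorem sub_apply_smul {R A M : Type*} [Semiring R] [AddCommGroup M] [Module R M]
    [DistribSMul A M] {D : A → A} {N N' : Module.End R M}
    (h : IsLeibnizAlong D N) (h' : IsLeibnizAlong D N') (a : A) (m : M) :
    (N - N') (a • m) = a • (N - N') m := by
  rw [LinearMap.sub_apply, LinearMap.sub_apply, h, h', add_sub_add_left_eq_sub, smul_sub]

end IsLeibnizAlong

theorem statement6_general {R A M : Type*} [Semiring R] [AddCommGroup M] [Module R M]
    [DistribSMul A M] {p : ℕ} (hp : p.Prime) (hM : ∀ m : M, p • m = 0)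
    {D : A → A} {N Np : Module.End R M}
    (hN : IsLeibnizAlong D N) (hNp : IsLeibnizAlong D^[p] Np) (a : A) (m : M) :
    (N ^ p - Np) (a • m) = a • (N ^ p - Np) m :=
  (hN.pow_prime hp hM).sub_apply_smul hNp a m

/-- Let `p` be a prime, `R` a commutative ring, `A` a
commutative `R`-algebra of characteristic `p` and `M` an `A`-module.  Let `∇`
be a connection on `M`: a map from `R`-derivations of `A` to `R`-linear
endomorphisms of `M` which is additive in `D`, `A`-linear in `D`, and
satisfies the Leibniz rule.  For a derivation `D`, let `Dp` be the
`R`-derivation whose underlying map is the `p`-fold composite of `D`.  Then the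
`p`-curvature `ψ(D) = (∇_D)^p - ∇_{Dp}` is `A`-linear. -/
theorem statement6 {R A M : Type*} [CommRing R] [CommRing A] [Algebra R A]
    [AddCommGroup M] [Module R M] [Module A M] [IsScalarTower R A M]
    (p : ℕ) (hp : p.Prime) [CharP A p]
    (nabla : Derivation R A A → Module.End R M)
    (hadd : ∀ D E : Derivation R A A, nabla (D + E) = nabla D + nabla E)
    (hsmul : ∀ (a : A) (D : Derivation R A A) (m : M),
      nabla (a • D) m = a • nabla D m)
    (hleib : ∀ (D : Derivation R A A) (a : A) (m : M),
      nabla D (a • m) = (D a) • m + a • nabla D m)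
    (D Dp : Derivation R A A)
    (hDp : ∀ x : A, Dp x = (((D : A →ₗ[R] A)) ^ p) x)
    (a : A) (m : M) :
    ((nabla D) ^ p - nabla Dp) (a • m) = a • (((nabla D) ^ p - nabla Dp) m) := by
  have hDp_iterate : ⇑Dp = D^[p] := funext fun x => (hDp x).trans (Module.End.pow_apply _ p x)
  exact statement6_general hp (nsmul_eq_zero_of_charP A p) (hleib D) (hDp_iterate ▸ hleib Dp) a m
end

section
/- Let p be a prime, R a commutative ring, A a commutative R-algebra of characteristic p, and M an A-module with a connection ∇ (a map from R-derivations of A to R-linear endomorphisms of M that is additive in D, A-linear in D, and satisfies the Leibniz rule). With ψ(D) := (∇_D)^p − ∇_{D^{[p]}} the p-curvature, one has for every a ∈ A and every R-derivation D of A: ψ(a•D)(m) = a^p • (ψ(D)(m)) for all m ∈ M; that is, ψ(a•D) = a^p • ψ(D). -/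
/-!
Moving coefficients to the left turns a power of `a • T` into `∑ k, c k • T ^ k`. Record such an
expression by the polynomial `∑ k, c k X ^ k`; then composing with `a • T` on the left becomes the
operator `L f = a (X f + D f)` on `A[X]`, with `D` acting on coefficients. Since
`[L, d/dX]` is multiplication by `-a`, `[L, b] = a (D b)` for `b : A`, and `ad (L ^ p) = (ad L) ^ p`
in characteristic `p`, the derivative of `L ^ p 1` is the constant `(a D) ^ (p - 1) a`. As `L ^ p 1`
has degree at most `p`, this leaves only the terms in `X ^ p` and `X`, which is Hochschild's formula
`(a T) ^ p = a ^ p T ^ p + (a D) ^ (p - 1) a T`. Applied to `∇_D` and to `D` itself, it produces the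
same correction coefficient, and the two correction terms cancel in the `p`-curvature.
-/

open Polynomial

section CharP

theorem charP_moduleEnd (R E : Type*) [CommSemiring R] [Semiring E] [Algebra R E]
    (p : ℕ) [CharP E p] : CharP (Module.End R E) p :=
  charP_of_injective_ringHom (f := (Algebra.lmul R E).toRingHom) Algebra.lmul_injective p

attribute [local instance] LieRing.ofAssociativeRing

theorem ad_pow_char (R : Type*) {E : Type*} [CommRing R] [Ring E] [Algebra R E]
    (p : ℕ) [Fact p.Prime] [CharP E p] (x : E) :
    LieAlgebra.ad R E (x ^ p) = LieAlgebra.ad R E x ^ p := by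
  have := charP_moduleEnd R E p
  simp only [LieAlgebra.ad_eq_lmul_left_sub_lmul_right, Pi.sub_apply]
  rw [sub_pow_char_of_commute p (LinearMap.commute_mulLeft_right x x), LinearMap.pow_mulLeft,
    LinearMap.pow_mulRight]

theorem eq_of_derivative_eq_C_of_natDegree_le {A : Type*} [CommRing A] {p : ℕ} [hp : Fact p.Prime]
    [CharP A p] {f : A[X]} {c : A} (hf : derivative f = C c) (hdeg : f.natDegree ≤ p) :
    f = C (f.coeff p) * X ^ p + C c * X + C (f.coeff 0) := by
  have hp1 := hp.out.one_lt
  have coeff_succ (k : ℕ) : f.coeff (k + 1) * ((k + 1 : ℕ) : A) = (C c).coeff k := by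
    rw [← hf, coeff_derivative, Nat.cast_add_one]
  ext k
  simp only [coeff_add, coeff_C_mul, coeff_X_pow, coeff_X, coeff_C]
  obtain rfl | rfl | hk : k = 0 ∨ k = 1 ∨ 1 < k := by omega
  · simp [hp.out.ne_zero.symm]
  · simpa [hp1.ne] using coeff_succ 0
  · have hk0 : k ≠ 0 := by omega
    obtain hlt | rfl | hgt := lt_trichotomy k p
    · have hunit : IsUnit (k : A) :=
        (CharP.isUnit_natCast_iff hp.out).2 (Nat.not_dvd_of_pos_of_lt (by omega) hlt)
      have hmul : f.coeff k * (k : A) = 0 := by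
        obtain ⟨j, rfl⟩ : ∃ j, k = j + 1 := ⟨k - 1, by omega⟩
        rw [coeff_succ, coeff_C_of_ne_zero (by omega)]
      simp [hunit.mul_left_eq_zero.1 hmul, hlt.ne, hk.ne, hk0]
    · simp [hk.ne, hk0]
    · simp [coeff_eq_zero_of_natDegree_lt (hdeg.trans_lt hgt), hgt.ne', hk.ne, hk0]

end CharP

section Symbol

variable {R A : Type*} [CommRing R] [CommRing A] [Algebra R A] (D : Derivation R A A) (a : A)

/-- The derivation of `A[X]` that applies `D` to every coefficient and kills `X`: Mathlib's
`Derivation.mapCoeffs` with its values moved from `PolynomialModule A A` to `A[X]`. -/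
noncomputable def coeffDerivation : Derivation R A[X] A[X] :=
  (PolynomialModule.equivPolynomialSelf (R := A)).toLinearMap.compDer D.mapCoeffs

theorem coeff_coeffDerivation (f : A[X]) (k : ℕ) :
    (coeffDerivation D f).coeff k = D (f.coeff k) := by
  simp [coeffDerivation, PolynomialModule.equivPolynomial]

/-- A polynomial `∑ k, c k X ^ k` is the symbol of the operator `∑ k, c k • T ^ k`, where `T`
satisfies the Leibniz rule over `D`; this is the effect on symbols of composing with `a • T` on the
left. -/
noncomputable def symbolMul : Module.End R A[X] :=
  a • (LinearMap.mulLeft R X + (coeffDerivation D : A[X] →ₗ[R] A[X]))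

theorem symbolMul_apply (f : A[X]) : symbolMul D a f = a • (X * f + coeffDerivation D f) :=
  rfl

theorem coeff_zero_symbolMul (f : A[X]) : (symbolMul D a f).coeff 0 = a * D (f.coeff 0) := by
  simp [symbolMul_apply, coeff_coeffDerivation]

theorem coeff_succ_symbolMul (f : A[X]) (k : ℕ) :
    (symbolMul D a f).coeff (k + 1) = a * (f.coeff k + D (f.coeff (k + 1))) := by
  simp [symbolMul_apply, coeff_coeffDerivation, mul_add]

theorem symbolMul_smul (b : A) (f : A[X]) :
    symbolMul D a (b • f) = (a • D) b • f + b • symbolMul D a f := by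
  ext k
  cases k <;>
    simp only [coeff_zero_symbolMul, coeff_succ_symbolMul, coeff_add, coeff_smul, smul_eq_mul,
      Derivation.leibniz, Derivation.smul_apply] <;>
    ring

theorem derivative_symbolMul (f : A[X]) :
    derivative (symbolMul D a f) = a • f + symbolMul D a (derivative f) := by
  ext k
  have leibniz_natCast (b : A) (n : ℕ) : D (b * (n + 1)) = (n + 1) * D b := by
    rw [← Nat.cast_succ, Derivation.leibniz, Derivation.map_natCast, smul_zero, zero_add,
      smul_eq_mul]
  cases k <;>
    simp only [coeff_derivative, coeff_zero_symbolMul, coeff_succ_symbolMul, coeff_add, coeff_smul,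
      smul_eq_mul, leibniz_natCast] <;>
    push_cast <;> ring

theorem natDegree_symbolMul_pow_one_le (n : ℕ) : ((symbolMul D a ^ n) 1).natDegree ≤ n := by
  induction n with
  | zero => simp
  | succ n ih =>
    rw [natDegree_le_iff_coeff_eq_zero] at ih ⊢
    intro k hk
    obtain ⟨j, rfl⟩ : ∃ j, k = j + 1 := ⟨k - 1, by omega⟩
    rw [pow_succ', Module.End.mul_apply, coeff_succ_symbolMul, ih j (by omega),
      ih (j + 1) (by omega), map_zero, add_zero, mul_zero]

theorem coeff_self_symbolMul_pow_one (n : ℕ) : ((symbolMul D a ^ n) 1).coeff n = a ^ n := by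
  induction n with
  | zero => simp
  | succ n ih =>
    have hcoeff : ((symbolMul D a ^ n) 1).coeff (n + 1) = 0 :=
      coeff_eq_zero_of_natDegree_lt (Nat.lt_succ_of_le (natDegree_symbolMul_pow_one_le D a n))
    rw [pow_succ', Module.End.mul_apply, coeff_succ_symbolMul, ih, hcoeff, map_zero, add_zero,
      pow_succ']

theorem coeff_zero_symbolMul_pow_one {n : ℕ} (hn : n ≠ 0) :
    ((symbolMul D a ^ n) 1).coeff 0 = 0 := by
  induction n, Nat.one_le_iff_ne_zero.2 hn using Nat.le_induction with
  | base => simp [coeff_zero_symbolMul]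
  | succ n h1 ih =>
    rw [pow_succ', Module.End.mul_apply, coeff_zero_symbolMul, ih (by omega), map_zero, mul_zero]

attribute [local instance] LieRing.ofAssociativeRing

theorem lie_symbolMul_derivative :
    ⁅symbolMul D a, (derivative (R := A)).restrictScalars R⁆ = -Algebra.lsmul R R A[X] a := by
  ext1 f
  simp [Ring.lie_def, derivative_symbolMul]

theorem ad_symbolMul_pow_lsmul (n : ℕ) (b : A) :
    (LieAlgebra.ad R (Module.End R A[X]) (symbolMul D a) ^ n) (Algebra.lsmul R R A[X] b) =
      Algebra.lsmul R R A[X] ((((a • D : Derivation R A A) : A →ₗ[R] A) ^ n) b) := by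
  have had : LieAlgebra.ad R (Module.End R A[X]) (symbolMul D a) ∘ₗ
        (Algebra.lsmul R R A[X]).toLinearMap =
      (Algebra.lsmul R R A[X]).toLinearMap ∘ₗ ((a • D : Derivation R A A) : A →ₗ[R] A) := by
    ext1 b
    ext1 f
    simp [Ring.lie_def, symbolMul_smul, mul_smul]
  exact DFunLike.congr_fun (Module.End.commute_pow_left_of_commute had n) b

theorem derivative_symbolMul_pow_char_one (p : ℕ) [hp : Fact p.Prime] [CharP A p] :
    derivative ((symbolMul D a ^ p) 1) =
      C ((((a • D : Derivation R A A) : A →ₗ[R] A) ^ (p - 1)) a) := by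
  have := charP_moduleEnd R A[X] p
  have hlie : ⁅symbolMul D a ^ p, (derivative (R := A)).restrictScalars R⁆ =
      -Algebra.lsmul R R A[X] ((((a • D : Derivation R A A) : A →ₗ[R] A) ^ (p - 1)) a) := by
    rw [← LieAlgebra.ad_apply (R := R), ad_pow_char, ← pow_sub_one_mul hp.out.ne_zero,
      Module.End.mul_apply, LieAlgebra.ad_apply, lie_symbolMul_derivative, map_neg,
      ad_symbolMul_pow_lsmul]
  simpa [Ring.lie_def, smul_eq_C_mul] using DFunLike.congr_fun hlie 1

theorem symbolMul_pow_char_one (p : ℕ) [hp : Fact p.Prime] [CharP A p] :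
    (symbolMul D a ^ p) 1 =
      C (a ^ p) * X ^ p + C ((((a • D : Derivation R A A) : A →ₗ[R] A) ^ (p - 1)) a) * X := by
  rw [eq_of_derivative_eq_C_of_natDegree_le (derivative_symbolMul_pow_char_one D a p)
    (natDegree_symbolMul_pow_one_le D a p), coeff_self_symbolMul_pow_one,
    coeff_zero_symbolMul_pow_one D a hp.out.ne_zero, C_0, add_zero]

end Symbol

section Hochschild

variable {R A N : Type*} [CommRing R] [CommRing A] [AddCommGroup N] [Module R N] [Module A N]

/-- The value at `x` of the operator `∑ k, c k • T ^ k` with symbol `∑ k, c k X ^ k`. -/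
noncomputable def symbolEval (T : Module.End R N) (x : N) : A[X] →ₗ[A] N :=
  lsum fun k => LinearMap.toSpanSingleton A N ((T ^ k) x)

theorem symbolEval_monomial (T : Module.End R N) (x : N) (k : ℕ) (b : A) :
    symbolEval T x (monomial k b) = b • (T ^ k) x := by
  simp [symbolEval, sum_monomial_index]

variable [Algebra R A] [IsScalarTower R A N]

theorem symbolEval_symbolMul {D : Derivation R A A} {T : Module.End R N}
    (hT : ∀ (b : A) (x : N), T (b • x) = D b • x + b • T x) (a : A) (x : N) (f : A[X]) :
    symbolEval T x (symbolMul D a f) = (a • T) (symbolEval T x f) := by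
  induction f using Polynomial.induction_on' with
  | add f g hf hg => simp only [map_add, hf, hg]
  | monomial k b =>
    have hsymbol : symbolMul D a (monomial k b) =
        a • (monomial (k + 1) b + monomial k (D b)) := by
      rw [symbolMul_apply, X_mul_monomial]
      congr 2
      ext j
      simp [coeff_coeffDerivation, coeff_monomial, apply_ite D]
    rw [hsymbol, map_smul, map_add, symbolEval_monomial, symbolEval_monomial, symbolEval_monomial,
      LinearMap.smul_apply, hT, pow_succ', Module.End.mul_apply, add_comm]

theorem symbolEval_symbolMul_pow_one {D : Derivation R A A} {T : Module.End R N}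
    (hT : ∀ (b : A) (x : N), T (b • x) = D b • x + b • T x) (a : A) (n : ℕ) (x : N) :
    symbolEval T x ((symbolMul D a ^ n) 1) = ((a • T) ^ n) x := by
  induction n with
  | zero => simpa using symbolEval_monomial T x 0 (1 : A)
  | succ n ih =>
    rw [pow_succ', Module.End.mul_apply, symbolEval_symbolMul hT, ih, pow_succ',
      Module.End.mul_apply]

theorem smul_pow_char_of_leibniz (p : ℕ) [Fact p.Prime] [CharP A p] {D : Derivation R A A}
    {T : Module.End R N} (hT : ∀ (b : A) (x : N), T (b • x) = D b • x + b • T x) (a : A) :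
    (a • T) ^ p =
      a ^ p • T ^ p + (((a • D : Derivation R A A) : A →ₗ[R] A) ^ (p - 1)) a • T := by
  ext x
  rw [← symbolEval_symbolMul_pow_one hT, symbolMul_pow_char_one, map_add,
    C_mul_X_pow_eq_monomial, C_mul_X_eq_monomial, symbolEval_monomial, symbolEval_monomial, pow_one]
  rfl

end Hochschild

/-- With `∇` a connection on an `A`-module `M` in
characteristic `p`, and `ψ(D) = (∇_D)^p - ∇_{D^[p]}` the `p`-curvature
(where `D^[p]` denotes the derivation whose underlying map is the `p`-fold
composite of `D`), one has `ψ(a • D) = a^p • ψ(D)` for every `a ∈ A`. -/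
theorem statement7 {R A M : Type*} [CommRing R] [CommRing A] [Algebra R A]
    [AddCommGroup M] [Module R M] [Module A M] [IsScalarTower R A M]
    (p : ℕ) (hp : p.Prime) [CharP A p]
    (nabla : Derivation R A A → Module.End R M)
    (hadd : ∀ D E : Derivation R A A, nabla (D + E) = nabla D + nabla E)
    (hsmul : ∀ (a : A) (D : Derivation R A A) (m : M),
      nabla (a • D) m = a • nabla D m)
    (hleib : ∀ (D : Derivation R A A) (a : A) (m : M),
      nabla D (a • m) = (D a) • m + a • nabla D m)
    (a : A) (D Dp aDp : Derivation R A A)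
    (hDp : ∀ x : A, Dp x = (((D : A →ₗ[R] A)) ^ p) x)
    (haDp : ∀ x : A, aDp x = ((((a • D : Derivation R A A) : A →ₗ[R] A)) ^ p) x)
    (m : M) :
    ((nabla (a • D)) ^ p - nabla aDp) m =
      a ^ p • (((nabla D) ^ p - nabla Dp) m) := by
  have : Fact p.Prime := ⟨hp⟩
  set c : A := (((a • D : Derivation R A A) : A →ₗ[R] A) ^ (p - 1)) a
  have hnabla : nabla (a • D) ^ p = a ^ p • nabla D ^ p + c • nabla D := by
    rw [show nabla (a • D) = a • nabla D from LinearMap.ext (hsmul a D)]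
    exact smul_pow_char_of_leibniz p (hleib D) a
  have hderiv : aDp = a ^ p • Dp + c • D := by
    ext x
    have hD (b y : A) : (D : A →ₗ[R] A) (b • y) = D b • y + b • (D : A →ₗ[R] A) y := by
      simp [mul_comm, add_comm]
    rw [haDp, Derivation.coe_smul_linearMap, smul_pow_char_of_leibniz p hD a]
    simp [hDp, c]
  calc (nabla (a • D) ^ p - nabla aDp) m
      = (a ^ p • (nabla D ^ p) m + c • nabla D m) - (a ^ p • nabla Dp m + c • nabla D m) := by
        rw [LinearMap.sub_apply, hnabla, hderiv, hadd, LinearMap.add_apply, LinearMap.add_apply,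
          hsmul, hsmul, LinearMap.smul_apply, LinearMap.smul_apply]
    _ = a ^ p • (nabla D ^ p - nabla Dp) m := by
        rw [add_sub_add_right_eq_sub, LinearMap.sub_apply, smul_sub]
end
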